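/- arXiv:1902.05708 — 5 statements merged into one kernel-verified Lean document; each statement's English description precedes it below -/
import Mathlib

section
/- Let K be a field, D an m×n matrix over K regarded as a linear map K^n → K^m, and U an n×n unipotent upper triangular matrix over K such that R := D·U is reduced. Then for every j ∈ {1,…,n}, the set of columns {U(*,k) : k ≤ j and R(*,k) = 0} is a basis of ker D ∩ span{e_1,…,e_j}, where e_1,…,e_n is the standard basis of K^n. In particular, the set {U(*,k) : R(*,k) = 0} is a basis of ker D. (Correctness of the kernel computation via graded reduction with an auxiliary matrix, Algorithm 3.) -/
/-!
Since `U` is invertible, every `v` is `U *ᵥ c` for some `c`, and `D *ᵥ v = (D * U) *ᵥ c`. The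
nonzero columns of the reduced matrix `R = D * U` have distinct pivots, so in a relation
`R *ᵥ c = 0` the nonzero column of largest pivot among those with nonzero coefficient cannot be
cancelled; hence `c` is supported on the zero columns of `R` (`Reduced.col_eq_zero`). Triangularity
of `U` moreover makes `c` vanish from index `j` on when `v` does
(`UnipotentUpper.eq_zero_of_mulVec`). So a kernel vector in `span {e_1, …, e_j}` is a combination
of the columns `U(*,k)` with `k ≤ j` and `R(*,k) = 0`; these are independent because `det U = 1`.
-/

/-- `i` is the pivot of `v`: the largest index at which `v` is nonzero. -/
def IsPivot {K : Type*} [Field K] {m : ℕ} (v : Fin m → K) (i : Fin m) : Prop :=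
  v i ≠ 0 ∧ ∀ k, v k ≠ 0 → k ≤ i

/-- A matrix is reduced if any two distinct nonzero columns have distinct pivots. -/
def Reduced {K : Type*} [Field K] {m n : ℕ} (R : Matrix (Fin m) (Fin n) K) : Prop :=
  ∀ (j k : Fin n) (i : Fin m), j ≠ k →
    IsPivot (fun r => R r j) i → ¬ IsPivot (fun r => R r k) i

/-- An `n × n` matrix is unipotent upper triangular if its entries below the diagonal
vanish and its diagonal entries all equal `1`. -/
def UnipotentUpper {K : Type*} [Field K] {n : ℕ} (U : Matrix (Fin n) (Fin n) K) : Prop :=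
  (∀ i j : Fin n, j < i → U i j = 0) ∧ ∀ i, U i i = 1

theorem exists_isPivot {K : Type*} [Field K] {m : ℕ} {v : Fin m → K} (hv : v ≠ 0) :
    ∃ i, IsPivot v i := by
  classical
  obtain ⟨i₀, hi₀⟩ := Function.ne_iff.mp hv
  obtain ⟨i, hi, hmax⟩ := Finset.exists_max_image (Finset.univ.filter fun i => v i ≠ 0) id
    ⟨i₀, by simpa using hi₀⟩
  exact ⟨i, by simpa using hi, fun k hk => hmax k (by simpa using hk)⟩

/-- A linear relation between the columns of a reduced matrix involves only zero columns. -/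
theorem Reduced.col_eq_zero {K : Type*} [Field K] {m n : ℕ} {R : Matrix (Fin m) (Fin n) K}
    (hR : Reduced R) {c : Fin n → K} (hc : R.mulVec c = 0) {k : Fin n} (hk : c k ≠ 0) :
    (fun i => R i k) = 0 := by
  classical
  by_contra hcol
  have hex : ∀ l : Fin n, ∃ p : Fin m, (fun i => R i l) ≠ 0 → IsPivot (fun i => R i l) p := by
    intro l
    by_cases h : (fun i => R i l) = 0
    · obtain ⟨p, -⟩ := exists_isPivot hcol
      exact ⟨p, fun h' => absurd h h'⟩
    · obtain ⟨p, hp⟩ := exists_isPivot h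
      exact ⟨p, fun _ => hp⟩
  choose p hp using hex
  obtain ⟨l, hl, hmax⟩ := Finset.exists_max_image
    (Finset.univ.filter fun l => c l ≠ 0 ∧ (fun i => R i l) ≠ 0) p ⟨k, by simpa using ⟨hk, hcol⟩⟩
  obtain ⟨hcl, hRl⟩ := (Finset.mem_filter.mp hl).2
  -- In the row of the largest pivot `p l`, only column `l` contributes.
  have hrow : R.mulVec c (p l) = R (p l) l * c l := by
    refine Finset.sum_eq_single l (fun q _ hql => ?_) (fun h => absurd (Finset.mem_univ l) h)
    by_contra hne
    have hRq : R (p l) q ≠ 0 := left_ne_zero_of_mul hne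
    have hq : (fun i => R i q) ≠ 0 := fun h => hRq (congrFun h (p l))
    have hle := hmax q (Finset.mem_filter.mpr
      ⟨Finset.mem_univ q, right_ne_zero_of_mul hne, hq⟩)
    have heq : p q = p l := le_antisymm hle ((hp q hq).2 _ hRq)
    exact hR q l (p q) hql (hp q hq) (heq ▸ hp l hRl)
  rw [hc] at hrow
  exact mul_ne_zero (hp l hRl).1 hcl hrow.symm

/-- The inverse of a unipotent upper triangular matrix preserves `span {e_1, …, e_j}`. -/
theorem UnipotentUpper.eq_zero_of_mulVec {K : Type*} [Field K] {n : ℕ}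
    {U : Matrix (Fin n) (Fin n) K} (hU : UnipotentUpper U) {c : Fin n → K} {j : ℕ}
    (h : ∀ i : Fin n, j ≤ i → U.mulVec c i = 0) (i : Fin n) (hi : j ≤ i) : c i = 0 := by
  by_contra hne
  obtain ⟨p, hp, hmax⟩ := exists_isPivot (v := c) (fun h => hne (congrFun h i))
  have hrow : U.mulVec c p = U p p * c p := by
    refine Finset.sum_eq_single p (fun q _ hqp => ?_) (fun h => absurd (Finset.mem_univ p) h)
    rcases lt_or_gt_of_ne hqp with hlt | hgt
    · show U p q * c q = 0
      rw [hU.1 p q hlt, zero_mul]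
    · have : c q = 0 := by
        by_contra hq
        exact absurd (hmax q hq) (not_le.mpr hgt)
      show U p q * c q = 0
      rw [this, mul_zero]
  rw [hU.2, one_mul, h p (hi.trans (hmax i hne))] at hrow
  exact hp hrow.symm

theorem UnipotentUpper.isUnit {K : Type*} [Field K] {n : ℕ}
    {U : Matrix (Fin n) (Fin n) K} (hU : UnipotentUpper U) : IsUnit U := by
  rw [Matrix.isUnit_iff_isUnit_det, Matrix.det_of_isUpperTriangular (fun i j h => hU.1 i j h)]
  simp [hU.2]

theorem mem_span_single_iff {K : Type*} [Field K] {n : ℕ} (j : ℕ) (v : Fin n → K) :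
    v ∈ Submodule.span K {v : Fin n → K | ∃ k : Fin n, (k : ℕ) < j ∧ v = Pi.single k 1} ↔
      ∀ i : Fin n, j ≤ i → v i = 0 := by
  constructor
  · intro hv i hi
    induction hv using Submodule.span_induction with
    | mem x hx =>
      obtain ⟨k, hk, rfl⟩ := hx
      exact Pi.single_eq_of_ne (fun h => by subst h; omega) _
    | zero => rfl
    | add x y _ _ hx hy => simp [hx, hy]
    | smul a x _ hx => simp [hx]
  · intro h
    rw [pi_eq_sum_univ' v]
    refine Submodule.sum_mem _ fun k _ => ?_
    by_cases hk : (k : ℕ) < j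
    · refine Submodule.smul_mem _ _ (Submodule.subset_span ⟨k, hk, ?_⟩)
      ext i
      simp [Pi.single_apply]
    · rw [h k (not_lt.mp hk), zero_smul]
      exact Submodule.zero_mem _

theorem span_cols_eq {K : Type*} [Field K] {m n : ℕ}
    (D : Matrix (Fin m) (Fin n) K) (U : Matrix (Fin n) (Fin n) K)
    (hU : UnipotentUpper U) (hR : Reduced (D * U)) (j : ℕ) :
    Submodule.span K
        {v : Fin n → K |
          ∃ k : Fin n, (k : ℕ) < j ∧ ((fun i => (D * U) i k) = 0) ∧ v = fun i => U i k}
      = LinearMap.ker D.mulVecLin ⊓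
          Submodule.span K {v : Fin n → K | ∃ k : Fin n, (k : ℕ) < j ∧ v = Pi.single k 1} := by
  apply le_antisymm
  · rw [Submodule.span_le]
    rintro v ⟨k, hk, hcol, rfl⟩
    refine ⟨?_, (mem_span_single_iff j _).mpr fun i hi => hU.1 i k (Fin.lt_def.mpr (by omega))⟩
    -- `D` applied to the column `U(*,k)` is by definition the column `(D * U)(*,k)`.
    exact hcol
  · rintro v ⟨hker, hspan⟩
    obtain ⟨c, rfl⟩ := (Matrix.mulVec_surjective_iff_isUnit.mpr hU.isUnit) v
    have hc : (D * U).mulVec c = 0 := by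
      rw [← Matrix.mulVec_mulVec]
      exact hker
    have hsupp := hU.eq_zero_of_mulVec ((mem_span_single_iff j _).mp hspan)
    rw [Matrix.mulVec_eq_sum]
    refine Submodule.sum_mem _ fun k _ => ?_
    by_cases hk : c k = 0
    · simp [hk]
    · have hkj : (k : ℕ) < j := by
        by_contra hlt
        exact hk (hsupp k (not_lt.mp hlt))
      rw [op_smul_eq_smul]
      exact Submodule.smul_mem _ _ (Submodule.subset_span ⟨k, hkj, hR.col_eq_zero hc hk, rfl⟩)

/-- Correctness of kernel computation via the graded reduction with an auxiliary matrix
(Algorithm 3): if `R = D * U` is reduced with `U` unipotent upper triangular, then for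
every `j ∈ {1,…,n}` the columns `U(*,k)` with `k ≤ j` and `R(*,k) = 0` form a basis of
`ker D ∩ span{e_1,…,e_j}`; in particular the columns `U(*,k)` with `R(*,k) = 0` form a
basis of `ker D`. -/
theorem kernel_basis_from_graded_reduction {K : Type*} [Field K] {m n : ℕ}
    (D : Matrix (Fin m) (Fin n) K) (U : Matrix (Fin n) (Fin n) K)
    (hU : UnipotentUpper U) (hR : Reduced (D * U)) :
    (∀ j : ℕ, j ≤ n →
      LinearIndependent K
        (fun k : {k : Fin n // (k : ℕ) < j ∧ (fun i => (D * U) i k) = 0} =>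
          fun i => U i k.1) ∧
      Submodule.span K
          {v : Fin n → K |
            ∃ k : Fin n, (k : ℕ) < j ∧ ((fun i => (D * U) i k) = 0) ∧ v = fun i => U i k}
        = LinearMap.ker D.mulVecLin ⊓
            Submodule.span K {v : Fin n → K | ∃ k : Fin n, (k : ℕ) < j ∧ v = Pi.single k 1}) ∧
    (LinearIndependent K
        (fun k : {k : Fin n // (fun i => (D * U) i k) = 0} => fun i => U i k.1) ∧
      Submodule.span K
          {v : Fin n → K | ∃ k : Fin n, ((fun i => (D * U) i k) = 0) ∧ v = fun i => U i k}
        = LinearMap.ker D.mulVecLin) := by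
  have hli : LinearIndependent K (fun k : Fin n => fun i => U i k) :=
    Matrix.linearIndependent_cols_iff_isUnit.mpr hU.isUnit
  refine ⟨fun j _ => ⟨hli.comp _ Subtype.val_injective, span_cols_eq D U hU hR j⟩,
    hli.comp _ Subtype.val_injective, ?_⟩
  -- The description of the whole kernel is the case `j = n`.
  have htop : Submodule.span K {v : Fin n → K | ∃ k : Fin n, (k : ℕ) < n ∧ v = Pi.single k 1}
      = ⊤ :=
    eq_top_iff.mpr fun v _ => (mem_span_single_iff n v).mpr fun i hi => absurd i.2 (not_lt.mpr hi)
  have h := span_cols_eq D U hU hR n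
  rw [htop, inf_top_eq] at h
  simpa only [Fin.is_lt, true_and] using h
end

section
/- Let K be a field, D an m×n matrix over K regarded as a linear map K^n → K^m, g_1,…,g_n ∈ ℤ² column labels, and for z ∈ ℤ² write K_z := ker D ∩ V_z. Suppose (v_1,z_1),…,(v_r,z_r) ∈ K^n × ℤ² are pairs such that for every z ∈ ℤ², the family {v_l : z_l ≤ z} is linearly independent and spans K_z. Then for every z ∈ ℤ², the number of indices l with z_l = z equals dim K_z − dim(K_{z−e₁} + K_{z−e₂}). In particular, the multiset {z_1,…,z_r} is uniquely determined by D and the labels g_1,…,g_n (it is the 0-th bigraded Betti number of the kernel, computed by the algorithm KerBetti). -/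
/-!
In `ℤ²`, `y ≤ z` with `y ≠ z` holds exactly when `y ≤ z - e₁` or `y ≤ z - e₂`
(`le_sub_or_le_sub_iff`). Hence `K_{z-e₁} + K_{z-e₂}` is spanned by the `v_l` with `z_l ≤ z` and
`z_l ≠ z`. These are part of the basis `{v_l : z_l ≤ z}` of `K_z`, so they are linearly independent
and the dimension of the sum is their number (`finrank_span_of_subfamily`); the basis vectors left
out are those with `z_l = z` (`card_grade_add_finrank`). The resulting formula for the number of
`l` with `z_l = z` involves only `D` and `g`, which gives uniqueness.
-/

/-- The grade-`z` piece `K_z = ker D ∩ V_z` of the kernel of a morphism of free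
2-parameter persistence modules given in coordinates by `D` with column labels `g`,
where `V_z = span{e_k : g_k ≤ z}`. -/
noncomputable def Kspace {K : Type*} [Field K] {m n : ℕ} (D : Matrix (Fin m) (Fin n) K)
    (g : Fin n → ℤ × ℤ) (z : ℤ × ℤ) : Submodule K (Fin n → K) :=
  LinearMap.ker D.mulVecLin ⊓
    Submodule.span K {w : Fin n → K | ∃ k : Fin n, g k ≤ z ∧ w = Pi.single k 1}

lemma le_sub_or_le_sub_iff (y z : ℤ × ℤ) :
    (y ≤ z - (1, 0) ∨ y ≤ z - (0, 1)) ↔ (y ≤ z ∧ y ≠ z) := by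
  obtain ⟨a, b⟩ := y
  obtain ⟨c, d⟩ := z
  simp only [Prod.mk_sub_mk, Prod.mk_le_mk, ne_eq, Prod.mk.injEq]
  omega

lemma finrank_span_of_subfamily {K W ι : Type*} [Field K] [AddCommGroup W] [Module K W]
    [Finite ι] (v : ι → W) (P Q : ι → Prop) (hPQ : ∀ l, P l → Q l)
    (hQ : LinearIndependent K (fun l : {l : ι // Q l} => v l.1)) :
    Module.finrank K (Submodule.span K {w : W | ∃ l : ι, P l ∧ w = v l})
      = Nat.card {l : ι // P l} := by
  have := Fintype.ofFinite {l : ι // P l}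
  have hP : LinearIndependent K (fun l : {l : ι // P l} => v l.1) :=
    hQ.comp (fun l : {l : ι // P l} => (⟨l.1, hPQ l.1 l.2⟩ : {l : ι // Q l}))
      (fun a b h => Subtype.ext (congrArg (fun x : {l : ι // Q l} => x.1) h))
  have hset : {w : W | ∃ l : ι, P l ∧ w = v l}
      = Set.range (fun l : {l : ι // P l} => v l.1) := by
    ext w
    simp [eq_comm]
  rw [hset, finrank_span_eq_card hP, Nat.card_eq_fintype_card]

lemma card_grade_add_finrank {K : Type*} [Field K] {m n : ℕ}
    (D : Matrix (Fin m) (Fin n) K) (g : Fin n → ℤ × ℤ)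
    (r : ℕ) (v : Fin r → Fin n → K) (zl : Fin r → ℤ × ℤ)
    (hbasis : ∀ z : ℤ × ℤ,
      LinearIndependent K (fun l : {l : Fin r // zl l ≤ z} => v l.1) ∧
      Submodule.span K {w : Fin n → K | ∃ l : Fin r, zl l ≤ z ∧ w = v l} = Kspace D g z)
    (z : ℤ × ℤ) :
    Nat.card {l : Fin r // zl l = z}
        + Module.finrank K ↥(Kspace D g (z - (1, 0)) ⊔ Kspace D g (z - (0, 1)))
      = Module.finrank K ↥(Kspace D g z) := by
  have hsup : Kspace D g (z - (1, 0)) ⊔ Kspace D g (z - (0, 1))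
      = Submodule.span K {w : Fin n → K | ∃ l : Fin r, (zl l ≤ z ∧ zl l ≠ z) ∧ w = v l} := by
    rw [← (hbasis _).2, ← (hbasis _).2, ← Submodule.span_union]
    congr 1
    ext w
    simp only [Set.mem_union, Set.mem_ofPred_eq, ← le_sub_or_le_sub_iff, or_and_right, exists_or]
  rw [hsup, ← (hbasis z).2,
    finrank_span_of_subfamily v _ (fun l => zl l ≤ z) (fun _ h => h.1) (hbasis z).1,
    finrank_span_of_subfamily v _ (fun l => zl l ≤ z) (fun _ h => h) (hbasis z).1]
  classical
  simp only [Nat.card_eq_fintype_card, Fintype.card_subtype]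
  rw [← Finset.card_union_of_disjoint]
  · congr 1
    ext l
    simp only [Finset.mem_union, Finset.mem_filter, Finset.mem_univ, true_and]
    constructor
    · rintro (h | h)
      exacts [h.le, h.1]
    · intro h
      by_cases e : zl l = z
      exacts [Or.inl e, Or.inr ⟨h, e⟩]
  · rw [Finset.disjoint_filter]
    exact fun l _ h h' => h'.2 h

/-- If the pairs `(v_l, z_l)` are such that for every `z` the vectors `v_l` with
`z_l ≤ z` form a basis of `K_z = ker D ∩ V_z`, then for every `z` the number of indices
`l` with `z_l = z` equals `dim K_z − dim(K_{z−e₁} + K_{z−e₂})`; in particular the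
multiset of grades `{z_1,…,z_r}` is uniquely determined by `D` and the labels `g`
(it is the 0-th bigraded Betti number of the kernel, computed by `KerBetti`). -/
theorem betti_of_kernel_basis {K : Type*} [Field K] {m n : ℕ}
    (D : Matrix (Fin m) (Fin n) K) (g : Fin n → ℤ × ℤ)
    (r : ℕ) (v : Fin r → Fin n → K) (zl : Fin r → ℤ × ℤ)
    (hbasis : ∀ z : ℤ × ℤ,
      LinearIndependent K (fun l : {l : Fin r // zl l ≤ z} => v l.1) ∧
      Submodule.span K {w : Fin n → K | ∃ l : Fin r, zl l ≤ z ∧ w = v l} = Kspace D g z) :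
    (∀ z : ℤ × ℤ,
      Nat.card {l : Fin r // zl l = z}
          + Module.finrank K ↥(Kspace D g (z - (1, 0)) ⊔ Kspace D g (z - (0, 1)))
        = Module.finrank K ↥(Kspace D g z)) ∧
    (∀ (r' : ℕ) (v' : Fin r' → Fin n → K) (zl' : Fin r' → ℤ × ℤ),
      (∀ z : ℤ × ℤ,
        LinearIndependent K (fun l : {l : Fin r' // zl' l ≤ z} => v' l.1) ∧
        Submodule.span K {w : Fin n → K | ∃ l : Fin r', zl' l ≤ z ∧ w = v' l}
          = Kspace D g z) →
      ∀ z : ℤ × ℤ, Nat.card {l : Fin r // zl l = z} = Nat.card {l : Fin r' // zl' l = z}) := by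
  refine ⟨card_grade_add_finrank D g r v zl hbasis, fun r' v' zl' h' z => ?_⟩
  have h₁ := card_grade_add_finrank D g r v zl hbasis z
  have h₂ := card_grade_add_finrank D g r' v' zl' h' z
  omega
end

section
/- Let K be a field, D an m×n matrix over K with column labels g_1,…,g_n ∈ ℤ², and for z ∈ ℤ² let I_z := span{D(*,j) : g_j ≤ z} ⊆ K^m. Then there exist pairs (w_1,y_1),…,(w_s,y_s) ∈ K^m × ℤ² with w_l ∈ I_{y_l} for each l, such that: (i) for every z ∈ ℤ², I_z = span{w_l : y_l ≤ z}; (ii) s = Σ_{z ∈ ℤ²} (dim I_z − dim(I_{z−e₁} + I_{z−e₂})), a sum with only finitely many nonzero terms; and (iii) s is minimal: every collection of pairs (w'_k, y'_k) with w'_k ∈ I_{y'_k} satisfying condition (i) has at least s elements. (Correctness of the algorithm MinGens, which computes a minimal set of homogeneous generators of the image of a morphism of free 2-parameter persistence modules.) -/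
/-!
Write `J_z = I_{z-e₁} + I_{z-e₂} ≤ I_z` and `d_z = dim I_z - dim J_z`.

Lower bound: a generator of grade `y ≤ z`, `y ≠ z`, lies in `J_z`, so for any homogeneous generating
family the generators of grade exactly `z` must span `I_z` modulo `J_z`; hence there are at least
`d_z` of them (`finrank_sub_le_card_fiber`). Applied to the columns of `D`, this also shows that
`d` has finite support; summing over `z` shows that every generating family has at least
`∑ d_z` members (`finsum_le_card`).

Existence: for each `z` choose `d_z` vectors spanning `I_z` modulo `J_z`
(`exists_complement_family`). The union of these families generates, by induction on `z.1 + z.2`: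
`I_z` vanishes once `z.1 + z.2` is smaller than all the coordinate sums of the column labels.
-/

/-- The grade-`z` piece `I_z = span{D(*,j) : g_j ≤ z}` of the image of a morphism of free
2-parameter persistence modules given in coordinates by `D` with column labels `g`. -/
noncomputable def Ispace {K : Type*} [Field K] {m n : ℕ} (D : Matrix (Fin m) (Fin n) K)
    (g : Fin n → ℤ × ℤ) (z : ℤ × ℤ) : Submodule K (Fin m → K) :=
  Submodule.span K {w : Fin m → K | ∃ j : Fin n, g j ≤ z ∧ w = fun i => D i j}

/-- The sum `J_z = I_{z-e₁} + I_{z-e₂}` of the two pieces immediately below grade `z`. -/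
noncomputable def Jspace {K : Type*} [Field K] {m n : ℕ} (D : Matrix (Fin m) (Fin n) K)
    (g : Fin n → ℤ × ℤ) (z : ℤ × ℤ) : Submodule K (Fin m → K) :=
  Ispace D g (z - (1, 0)) ⊔ Ispace D g (z - (0, 1))

lemma sub_e1_le (z : ℤ × ℤ) : z - (1, 0) ≤ z := by
  simp [Prod.le_def]

lemma sub_e2_le (z : ℤ × ℤ) : z - (0, 1) ≤ z := by
  simp [Prod.le_def]

lemma le_sub_of_le_of_ne {y z : ℤ × ℤ} (h : y ≤ z) (hne : y ≠ z) :
    y ≤ z - (1, 0) ∨ y ≤ z - (0, 1) := by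
  obtain ⟨a, b⟩ := y
  obtain ⟨c, d⟩ := z
  simp only [Prod.mk_le_mk, Prod.mk_sub_mk, ne_eq, Prod.mk.injEq] at *
  omega

section

variable {K : Type*} [Field K] {m n : ℕ} (D : Matrix (Fin m) (Fin n) K) (g : Fin n → ℤ × ℤ)

lemma Ispace_mono {y z : ℤ × ℤ} (h : y ≤ z) : Ispace D g y ≤ Ispace D g z := by
  apply Submodule.span_mono
  rintro w ⟨j, hj, rfl⟩
  exact ⟨j, hj.trans h, rfl⟩

lemma Jspace_le (z : ℤ × ℤ) : Jspace D g z ≤ Ispace D g z :=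
  sup_le (Ispace_mono D g (sub_e1_le z)) (Ispace_mono D g (sub_e2_le z))

/-- A homogeneous generating family has at least `d_z` members of grade exactly `z`, because all
its members of grade strictly below `z` lie in `J_z`. -/
lemma finrank_sub_le_card_fiber {s : ℕ} (w : Fin s → Fin m → K) (y : Fin s → ℤ × ℤ)
    (hw : ∀ l, w l ∈ Ispace D g (y l)) (z : ℤ × ℤ)
    (hz : Ispace D g z = Submodule.span K {u : Fin m → K | ∃ l : Fin s, y l ≤ z ∧ u = w l}) :
    Module.finrank K (Ispace D g z) - Module.finrank K (Jspace D g z)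
      ≤ (Finset.univ.filter fun l => y l = z).card := by
  classical
  set T := Finset.univ.filter fun l => y l = z with hT
  have hle : Ispace D g z ≤ Jspace D g z ⊔ Submodule.span K (T.image w : Set (Fin m → K)) := by
    rw [hz, Submodule.span_le]
    rintro u ⟨l, hl, rfl⟩
    by_cases h : y l = z
    · apply Submodule.mem_sup_right
      apply Submodule.subset_span
      simp only [Finset.coe_image, Set.mem_image, Finset.mem_coe]
      exact ⟨l, by simp [hT, h], rfl⟩
    · apply Submodule.mem_sup_left
      rcases le_sub_of_le_of_ne hl h with h1 | h1
      · exact Submodule.mem_sup_left (Ispace_mono D g h1 (hw l))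
      · exact Submodule.mem_sup_right (Ispace_mono D g h1 (hw l))
  have h1 := Submodule.finrank_mono hle
  have h2 := Submodule.finrank_add_le_finrank_add_finrank (Jspace D g z)
    (Submodule.span K (T.image w : Set (Fin m → K)))
  have h3 := finrank_span_finset_le_card (R := K) (T.image w)
  have h4 : (T.image w).card ≤ T.card := Finset.card_image_le
  simp only [Set.finrank] at h3
  omega

lemma support_finite :
    {z : ℤ × ℤ | Module.finrank K (Ispace D g z) - Module.finrank K (Jspace D g z) ≠ 0}.Finite := by
  apply (Set.finite_range g).subset
  intro z hz
  -- The columns of `D` form a generating family, so a grade with `d_z ≠ 0` is a column label.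
  have h := finrank_sub_le_card_fiber D g (fun j i => D i j) g
    (fun l => Submodule.subset_span ⟨l, le_rfl, rfl⟩) z rfl
  have hpos : 0 < (Finset.univ.filter fun l => g l = z).card :=
    lt_of_lt_of_le (Nat.pos_of_ne_zero hz) h
  obtain ⟨l, hl⟩ := Finset.card_pos.mp hpos
  exact ⟨l, by simpa using hl⟩

lemma finsum_le_card {s : ℕ} (w : Fin s → Fin m → K) (y : Fin s → ℤ × ℤ)
    (hw : ∀ l, w l ∈ Ispace D g (y l))
    (hz : ∀ z, Ispace D g z
      = Submodule.span K {u : Fin m → K | ∃ l : Fin s, y l ≤ z ∧ u = w l}) :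
    ∑ z ∈ (support_finite D g).toFinset,
      (Module.finrank K (Ispace D g z) - Module.finrank K (Jspace D g z)) ≤ s := by
  calc _ ≤ ∑ z ∈ (support_finite D g).toFinset, (Finset.univ.filter fun l => y l = z).card :=
        Finset.sum_le_sum fun z _ => finrank_sub_le_card_fiber D g w y hw z (hz z)
    _ ≤ (Finset.univ : Finset (Fin s)).card := by
        rw [Finset.sum_card_fiberwise_eq_card_filter]
        exact Finset.card_filter_le _ _
    _ = s := by simp

end

/-- Between nested subspaces `J ≤ I`, as many vectors as the codimension suffice to span `I`
modulo `J`: take a basis of a complement of `J` in `I`. -/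
lemma exists_complement_family {K V : Type*} [Field K] [AddCommGroup V] [Module K V]
    [FiniteDimensional K V] (I J : Submodule K V) (h : J ≤ I) :
    ∃ v : Fin (Module.finrank K I - Module.finrank K J) → V,
      (∀ i, v i ∈ I) ∧ I = J ⊔ Submodule.span K (Set.range v) := by
  obtain ⟨C', hC'⟩ := Submodule.exists_isCompl J
  have hsup : J ⊔ C' ⊓ I = I := by
    rw [← sup_inf_assoc_of_le C' h, hC'.sup_eq_top, top_inf_eq]
  have hinf : J ⊓ (C' ⊓ I) = ⊥ := by
    rw [← inf_assoc, hC'.inf_eq_bot, bot_inf_eq]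
  have hdim := Submodule.finrank_sup_add_finrank_inf_eq J (C' ⊓ I)
  rw [hsup, hinf, finrank_bot] at hdim
  have hC : Module.finrank K ↥(C' ⊓ I) = Module.finrank K I - Module.finrank K J := by omega
  let b := Module.finBasisOfFinrankEq K ↥(C' ⊓ I) hC
  refine ⟨fun i => (b i : V), fun i => (b i).2.2, ?_⟩
  have hspan : Submodule.span K (Set.range fun i => (b i : V)) = C' ⊓ I := by
    have := congrArg (Submodule.map (C' ⊓ I).subtype) b.span_eq
    rw [Submodule.map_span, ← Set.range_comp, Submodule.map_subtype_top] at this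
    exact this
  rw [hspan, hsup]

/-- Correctness of the algorithm `MinGens`: the image of a morphism of free 2-parameter
persistence modules has a set of homogeneous generators `(w_l, y_l)`, `1 ≤ l ≤ s`, such
that (i) for every grade `z`, `I_z = span{w_l : y_l ≤ z}`; (ii)
`s = Σ_z (dim I_z − dim(I_{z−e₁} + I_{z−e₂}))`, a sum with only finitely many nonzero
terms; and (iii) `s` is minimal among all homogeneous generating sets. -/
theorem minimal_generators_of_image {K : Type*} [Field K] {m n : ℕ}
    (D : Matrix (Fin m) (Fin n) K) (g : Fin n → ℤ × ℤ) :
    ∃ (s : ℕ) (w : Fin s → Fin m → K) (y : Fin s → ℤ × ℤ),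
      (∀ l : Fin s, w l ∈ Ispace D g (y l)) ∧
      (∀ z : ℤ × ℤ,
        Ispace D g z = Submodule.span K {u : Fin m → K | ∃ l : Fin s, y l ≤ z ∧ u = w l}) ∧
      ({z : ℤ × ℤ |
          Module.finrank K ↥(Ispace D g z)
            - Module.finrank K ↥(Ispace D g (z - (1, 0)) ⊔ Ispace D g (z - (0, 1))) ≠ 0}.Finite) ∧
      (s = ∑ᶠ z : ℤ × ℤ,
        (Module.finrank K ↥(Ispace D g z)
          - Module.finrank K ↥(Ispace D g (z - (1, 0)) ⊔ Ispace D g (z - (0, 1))))) ∧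
      (∀ (s' : ℕ) (w' : Fin s' → Fin m → K) (y' : Fin s' → ℤ × ℤ),
        (∀ l : Fin s', w' l ∈ Ispace D g (y' l)) →
        (∀ z : ℤ × ℤ,
          Ispace D g z
            = Submodule.span K {u : Fin m → K | ∃ l : Fin s', y' l ≤ z ∧ u = w' l}) →
        s ≤ s') := by
  classical
  change ∃ (s : ℕ) (w : Fin s → Fin m → K) (y : Fin s → ℤ × ℤ),
    (∀ l : Fin s, w l ∈ Ispace D g (y l)) ∧
    (∀ z : ℤ × ℤ,
      Ispace D g z = Submodule.span K {u : Fin m → K | ∃ l : Fin s, y l ≤ z ∧ u = w l}) ∧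
    ({z : ℤ × ℤ |
      Module.finrank K (Ispace D g z) - Module.finrank K (Jspace D g z) ≠ 0}.Finite) ∧
    (s = ∑ᶠ z : ℤ × ℤ, (Module.finrank K (Ispace D g z) - Module.finrank K (Jspace D g z))) ∧ _
  have hsum : ∑ᶠ z : ℤ × ℤ, (Module.finrank K (Ispace D g z) - Module.finrank K (Jspace D g z))
      = ∑ z ∈ (support_finite D g).toFinset,
        (Module.finrank K (Ispace D g z) - Module.finrank K (Jspace D g z)) :=
    finsum_eq_sum_of_support_subset _ (by intro z hz; simpa using hz)
  choose v hvI hv using fun z => exists_complement_family _ _ (Jspace_le D g z)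
  set S := (support_finite D g).toFinset with hS
  let T := Σ z : S, Fin (Module.finrank K (Ispace D g z.1) - Module.finrank K (Jspace D g z.1))
  have hcard : Fintype.card T = ∑ z ∈ S,
      (Module.finrank K (Ispace D g z) - Module.finrank K (Jspace D g z)) := by
    simp only [T, Fintype.card_sigma, Fintype.card_fin]
    exact Finset.sum_coe_sort S fun z =>
      Module.finrank K (Ispace D g z) - Module.finrank K (Jspace D g z)
  let e : Fin (Fintype.card T) ≃ T := (Fintype.equivFin T).symm
  let w : Fin (Fintype.card T) → Fin m → K := fun l => v (e l).1.1 (e l).2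
  let y : Fin (Fintype.card T) → ℤ × ℤ := fun l => (e l).1.1
  have hw : ∀ l, w l ∈ Ispace D g (y l) := fun l => hvI _ _
  have hmono : ∀ a z : ℤ × ℤ, a ≤ z →
      Submodule.span K {u : Fin m → K | ∃ l, y l ≤ a ∧ u = w l}
        ≤ Submodule.span K {u : Fin m → K | ∃ l, y l ≤ z ∧ u = w l} := by
    intro a z h
    apply Submodule.span_mono
    rintro u ⟨l, hl, rfl⟩
    exact ⟨l, hl.trans h, rfl⟩
  obtain ⟨c, hc⟩ : ∃ c : ℤ, ∀ j, c ≤ (g j).1 + (g j).2 := by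
    obtain ⟨c, hc⟩ := (Set.finite_range fun j => (g j).1 + (g j).2).bddBelow
    exact ⟨c, fun j => hc ⟨j, rfl⟩⟩
  have key : ∀ N : ℕ, ∀ z : ℤ × ℤ, z.1 + z.2 < c + N →
      Ispace D g z ≤ Submodule.span K {u : Fin m → K | ∃ l, y l ≤ z ∧ u = w l} := by
    intro N
    induction N with
    | zero =>
      intro z hz
      refine Submodule.span_le.mpr ?_
      rintro u ⟨j, hj, rfl⟩
      have h1 := hc j
      have h2 := hj.1
      have h3 := hj.2
      push_cast at hz
      omega
    | succ N ih =>
      intro z hz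
      push_cast at hz
      rw [hv z]
      refine sup_le (sup_le ?_ ?_) ?_
      · refine (ih _ ?_).trans (hmono _ _ (sub_e1_le z))
        simp only [Prod.fst_sub, Prod.snd_sub]
        omega
      · refine (ih _ ?_).trans (hmono _ _ (sub_e2_le z))
        simp only [Prod.fst_sub, Prod.snd_sub]
        omega
      · rw [Submodule.span_le]
        rintro u ⟨i, rfl⟩
        -- The mere existence of `i` forces `d_z ≠ 0`.
        have hzS : z ∈ S := by
          rw [hS, Set.Finite.mem_toFinset]
          have := i.2
          exact fun h0 => by omega
        refine Submodule.subset_span ⟨e.symm ⟨⟨z, hzS⟩, i⟩, ?_, ?_⟩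
        · simp [y]
        · simp only [w]
          rw [Equiv.apply_symm_apply]
  refine ⟨Fintype.card T, w, y, hw, ?_, support_finite D g, hcard.trans hsum.symm, ?_⟩
  · intro z
    apply le_antisymm
    · exact key (z.1 + z.2 - c + 1).toNat z (by omega)
    · rw [Submodule.span_le]
      rintro u ⟨l, hl, rfl⟩
      exact Ispace_mono D g hl (hw l)
  · intro s' w' y' hw' hz'
    rw [hcard]
    exact finsum_le_card D g w' y' hw' hz'
end

section
/- Let (P, h, c) and (P', h', c') be two presentation data over a field K, both column-minimal (semi-minimal), with associated modules M_z and M'_z. Suppose there is a family of linear isomorphisms φ_z : M_z → M'_z (z ∈ ℤ²) commuting with the structure maps, i.e., φ_z ∘ (M_{z'} → M_z) = (M'_{z'} → M'_z) ∘ φ_{z'} for all z' ≤ z. Then for every z ∈ ℤ²: m_z − rank D^z = m'_z − rank D'^z, and n_z − rank D^z = n'_z − rank D'^z. (The quantities m_z − rank D^z and n_z − rank D^z computed from any semi-minimal presentation are invariants of the presented module: they equal the bigraded Betti numbers β₀(z) and β₁(z).) -/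
/-!
The two numbers are expressed through the dimensions of the `M_z` and the ranks of maps built from
the structure maps, all of which an isomorphism of modules preserves. Put `a = z - e₁`,
`b = z - e₂` and `d = z - e₁ - e₂`, and consider the Koszul-type maps
`T : M_d → M_a × M_b` and `S : M_a × M_b → M_z`. Writing `s`, `t` for the ranks of `S`, `T`, the
identities (lemma `betti_numerics`) are
`m_z - rank D^z = dim M_z - s` and `n_z - rank D^z = dim M_a + dim M_b - s - t`,
i.e. the dimensions of the zeroth and first Koszul homology at `z`.

They follow from dimension counts inside `K^m`. The range of `S` is `(W_a + W_b + C_z) / C_z`, and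
the projection onto the coordinates of label `z` has kernel `W_a + W_b` on `W_z`, and sends `C_z`
onto the column space of `D^z`, since by the support condition a column of label `< z` vanishes
in the rows of label `z`. The range of `T` is `W_d / (C_a ∩ C_b)`, because `W_a ∩ W_b = W_d`.
Finally column-minimality says `dim C_z = dim (C_a + C_b) + n_z`.
-/

/-- The grade-`z` piece `W_z = span{e_i : h_i ≤ z} ⊆ K^m` of the free module with
generators at grades `h_1, …, h_m`. -/
def Wspace (K : Type*) [Field K] {m : ℕ} (h : Fin m → ℤ × ℤ) (z : ℤ × ℤ) :
    Submodule K (Fin m → K) :=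
  Submodule.span K {v : Fin m → K | ∃ i : Fin m, h i ≤ z ∧ v = Pi.single i 1}

/-- The grade-`z` piece `C_z = span{P(*,j) : c_j ≤ z} ⊆ K^m` of the submodule generated
by the columns of `P` with labels `c_1, …, c_n`. -/
def Cspace {K : Type*} [Field K] {m n : ℕ} (P : Matrix (Fin m) (Fin n) K)
    (c : Fin n → ℤ × ℤ) (z : ℤ × ℤ) : Submodule K (Fin m → K) :=
  Submodule.span K {v : Fin m → K | ∃ j : Fin n, c j ≤ z ∧ v = fun i => P i j}

theorem Wspace_mono (K : Type*) [Field K] {m : ℕ} (h : Fin m → ℤ × ℤ)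
    {z' z : ℤ × ℤ} (hz : z' ≤ z) : Wspace K h z' ≤ Wspace K h z :=
  Submodule.span_mono fun v hv => by
    obtain ⟨i, hi, rfl⟩ := hv
    exact ⟨i, hi.trans hz, rfl⟩

theorem Cspace_mono {K : Type*} [Field K] {m n : ℕ} (P : Matrix (Fin m) (Fin n) K)
    (c : Fin n → ℤ × ℤ) {z' z : ℤ × ℤ} (hz : z' ≤ z) : Cspace P c z' ≤ Cspace P c z :=
  Submodule.span_mono fun v hv => by
    obtain ⟨j, hj, rfl⟩ := hv
    exact ⟨j, hj.trans hz, rfl⟩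

/-- The grade-`z` piece `M_z = W_z / C_z` of the module presented by the presentation
data `(P, h, c)`, realized as the image of `W_z` in `K^m ⧸ C_z`. -/
noncomputable def Mmod {K : Type*} [Field K] {m n : ℕ} (P : Matrix (Fin m) (Fin n) K)
    (h : Fin m → ℤ × ℤ) (c : Fin n → ℤ × ℤ) (z : ℤ × ℤ) :
    Submodule K ((Fin m → K) ⧸ Cspace P c z) :=
  (Wspace K h z).map (Cspace P c z).mkQ

/-- The structure map `M_{z'} → M_z` induced by the inclusion `W_{z'} ⊆ W_z`. -/
noncomputable def structMap {K : Type*} [Field K] {m n : ℕ} (P : Matrix (Fin m) (Fin n) K)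
    (h : Fin m → ℤ × ℤ) (c : Fin n → ℤ × ℤ) {z' z : ℤ × ℤ} (hz : z' ≤ z) :
    Mmod P h c z' →ₗ[K] Mmod P h c z :=
  LinearMap.restrict
    (Submodule.mapQ (Cspace P c z') (Cspace P c z) LinearMap.id
      (by simpa using Cspace_mono P c hz))
    (fun x hx => by
      obtain ⟨w, hw, rfl⟩ := hx
      exact ⟨w, Wspace_mono K h hz hw, by simp [Submodule.mapQ_apply]⟩)

/-- The presentation data `(P, h, c)` is column-minimal (semi-minimal) if for every
grade `z` the columns of `P` with label `z` are linearly independent modulo the span of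
the columns with label `≤ z` but `≠ z`. -/
def ColumnMinimal {K : Type*} [Field K] {m n : ℕ} (P : Matrix (Fin m) (Fin n) K)
    (c : Fin n → ℤ × ℤ) : Prop :=
  ∀ z : ℤ × ℤ, LinearIndependent K
    (fun j : {j : Fin n // c j = z} =>
      Submodule.Quotient.mk
        (p := Submodule.span K
          {v : Fin m → K | ∃ j' : Fin n, c j' ≤ z ∧ c j' ≠ z ∧ v = fun i => P i j'})
        (fun i => P i j.1))

/-- The submatrix `D^z` of `P` on the rows with label `z` and columns with label `z`. -/
def Dsub {K : Type*} [Field K] {m n : ℕ} (P : Matrix (Fin m) (Fin n) K)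
    (h : Fin m → ℤ × ℤ) (c : Fin n → ℤ × ℤ) (z : ℤ × ℤ) :
    Matrix {i : Fin m // h i = z} {j : Fin n // c j = z} K :=
  Matrix.of fun i j => P i.1 j.1


/-! ### The spaces `W_z` and `C_z` -/

section Spaces

variable {K : Type*} [Field K] {m n : ℕ}

theorem mem_Wspace_iff (h : Fin m → ℤ × ℤ) (z : ℤ × ℤ) (v : Fin m → K) :
    v ∈ Wspace K h z ↔ ∀ i, ¬ h i ≤ z → v i = 0 := by
  constructor
  · intro hv i hi
    induction hv using Submodule.span_induction with
    | mem x hx =>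
      obtain ⟨k, hk, rfl⟩ := hx
      have : i ≠ k := by rintro rfl; exact hi hk
      simp [this]
    | zero => rfl
    | add x y _ _ hx hy => simp [hx, hy]
    | smul r x _ hx => simp [hx]
  · intro hv
    have hsum : v = ∑ i, v i • (Pi.single i 1 : Fin m → K) := by
      ext k
      simp [Finset.sum_apply, Pi.single_apply]
    rw [hsum]
    refine Submodule.sum_mem _ fun i _ => ?_
    by_cases hi : h i ≤ z
    · exact Submodule.smul_mem _ _ (Submodule.subset_span ⟨i, hi, rfl⟩)
    · simp [hv i hi]

theorem Cspace_le_Wspace (P : Matrix (Fin m) (Fin n) K) (h : Fin m → ℤ × ℤ)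
    (c : Fin n → ℤ × ℤ) (hsupp : ∀ i j, P i j ≠ 0 → h i ≤ c j) (z : ℤ × ℤ) :
    Cspace P c z ≤ Wspace K h z := by
  refine Submodule.span_le.2 ?_
  rintro v ⟨j, hj, rfl⟩
  refine (mem_Wspace_iff h z _).2 fun i hi => ?_
  by_contra hne
  exact hi ((hsupp i j hne).trans hj)

/-- In `ℤ²`, being strictly below `z` means being below `z - e₁` or below `z - e₂`. -/
theorem le_and_ne_iff (x z : ℤ × ℤ) :
    (x ≤ z ∧ x ≠ z) ↔ (x ≤ (z.1 - 1, z.2) ∨ x ≤ (z.1, z.2 - 1)) := by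
  obtain ⟨x1, x2⟩ := x
  obtain ⟨z1, z2⟩ := z
  simp only [Prod.mk_le_mk, ne_eq, Prod.mk.injEq]
  omega

theorem Wspace_inf (h : Fin m → ℤ × ℤ) (z : ℤ × ℤ) :
    Wspace K h (z.1 - 1, z.2) ⊓ Wspace K h (z.1, z.2 - 1) = Wspace K h (z.1 - 1, z.2 - 1) := by
  ext v
  simp only [Submodule.mem_inf, mem_Wspace_iff, ← forall_and]
  refine forall_congr' fun i => ?_
  have : h i ≤ (z.1 - 1, z.2 - 1) ↔ (h i ≤ (z.1 - 1, z.2) ∧ h i ≤ (z.1, z.2 - 1)) := by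
    simp only [Prod.le_def]
    omega
  rw [this]
  tauto

/-- The projection of `K^m` onto the coordinates with label `z`. -/
def labelProj (K : Type*) [Field K] {m : ℕ} (h : Fin m → ℤ × ℤ) (z : ℤ × ℤ) :
    (Fin m → K) →ₗ[K] ({i : Fin m // h i = z} → K) :=
  LinearMap.funLeft K K Subtype.val

theorem labelProj_apply (h : Fin m → ℤ × ℤ) (z : ℤ × ℤ) (v : Fin m → K)
    (i : {i : Fin m // h i = z}) : labelProj K h z v i = v i.1 := rfl

theorem Wspace_sup (h : Fin m → ℤ × ℤ) (z : ℤ × ℤ) :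
    Wspace K h (z.1 - 1, z.2) ⊔ Wspace K h (z.1, z.2 - 1)
      = Wspace K h z ⊓ LinearMap.ker (labelProj K h z) := by
  apply le_antisymm
  · refine sup_le ?_ ?_
    all_goals
      intro v hv
      rw [mem_Wspace_iff] at hv
      rw [Submodule.mem_inf, mem_Wspace_iff, LinearMap.mem_ker]
      refine ⟨fun i hi => hv i fun hle => hi ?_, ?_⟩
      · exact ((le_and_ne_iff (h i) z).2 (by tauto)).1
      · ext i
        rw [labelProj_apply]
        exact hv i.1 fun hle => ((le_and_ne_iff (h i.1) z).2 (by tauto)).2 i.2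
  · rintro v ⟨hv, hk⟩
    rw [SetLike.mem_coe, mem_Wspace_iff] at hv
    rw [SetLike.mem_coe, LinearMap.mem_ker] at hk
    classical
    have hsplit : v = (fun i => if h i ≤ (z.1 - 1, z.2) then v i else 0)
        + (fun i => if h i ≤ (z.1 - 1, z.2) then 0 else v i) := by
      ext i
      by_cases hi : h i ≤ (z.1 - 1, z.2) <;> simp [hi]
    rw [hsplit]
    refine Submodule.add_mem_sup ?_ ?_
    · refine (mem_Wspace_iff _ _ _).2 fun i hi => if_neg hi
    · refine (mem_Wspace_iff _ _ _).2 fun i hi => ?_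
      by_cases hi' : h i ≤ (z.1 - 1, z.2)
      · simp [hi']
      · simp only [hi', if_false]
        by_cases hz : h i ≤ z
        · by_cases he : h i = z
          · exact congrFun hk ⟨i, he⟩
          · exact absurd ((le_and_ne_iff (h i) z).1 ⟨hz, he⟩) (by tauto)
        · exact hv i hz

theorem Cspace_sup (P : Matrix (Fin m) (Fin n) K) (c : Fin n → ℤ × ℤ) (z : ℤ × ℤ) :
    Cspace P c (z.1 - 1, z.2) ⊔ Cspace P c (z.1, z.2 - 1)
      = Submodule.span K
          {v : Fin m → K | ∃ j' : Fin n, c j' ≤ z ∧ c j' ≠ z ∧ v = fun i => P i j'} := by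
  rw [Cspace, Cspace, ← Submodule.span_union]
  congr 1
  ext v
  simp only [Set.mem_union, Set.mem_ofPred_eq, ← exists_or]
  refine exists_congr fun j => ?_
  rw [← and_assoc, le_and_ne_iff]
  tauto

end Spaces

/-! ### Dimension counts -/

section Counts

variable {K : Type*} [Field K] {m n : ℕ}

theorem finrank_map_add_inf_ker {V V₂ : Type*} [AddCommGroup V] [Module K V]
    [AddCommGroup V₂] [Module K V₂] [FiniteDimensional K V] (f : V →ₗ[K] V₂)
    (U : Submodule K V) :
    Module.finrank K (U.map f) + Module.finrank K ↥(U ⊓ LinearMap.ker f)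
      = Module.finrank K U := by
  have h1 := LinearMap.finrank_range_add_finrank_ker (f.domRestrict U)
  rw [LinearMap.range_domRestrict, LinearMap.ker_domRestrict] at h1
  rw [← h1]
  congr 1
  rw [← Submodule.map_comap_subtype]
  exact Submodule.finrank_map_subtype_eq _ _

theorem finrank_Mmod (P : Matrix (Fin m) (Fin n) K) (h : Fin m → ℤ × ℤ)
    (c : Fin n → ℤ × ℤ) (hsupp : ∀ i j, P i j ≠ 0 → h i ≤ c j) (z : ℤ × ℤ) :
    Module.finrank K (Mmod P h c z) + Module.finrank K (Cspace P c z)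
      = Module.finrank K (Wspace K h z) := by
  have := finrank_map_add_inf_ker (Cspace P c z).mkQ (Wspace K h z)
  rwa [Submodule.ker_mkQ, inf_eq_right.2 (Cspace_le_Wspace P h c hsupp z)] at this

theorem map_labelProj_Wspace (h : Fin m → ℤ × ℤ) (z : ℤ × ℤ) :
    (Wspace K h z).map (labelProj K h z) = ⊤ := by
  classical
  rw [eq_top_iff]
  intro u _
  refine ⟨fun i => if hi : h i = z then u ⟨i, hi⟩ else 0, ?_, ?_⟩
  · refine (mem_Wspace_iff _ _ _).2 fun i hi => dif_neg ?_
    rintro rfl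
    exact hi le_rfl
  · ext i
    simp [labelProj_apply, i.2]

theorem finrank_Wspace (h : Fin m → ℤ × ℤ) (z : ℤ × ℤ) :
    Nat.card {i : Fin m // h i = z}
      + Module.finrank K ↥(Wspace K h (z.1 - 1, z.2) ⊔ Wspace K h (z.1, z.2 - 1))
      = Module.finrank K (Wspace K h z) := by
  rw [Wspace_sup, ← finrank_map_add_inf_ker (labelProj K h z) (Wspace K h z),
    map_labelProj_Wspace, finrank_top, Module.finrank_fintype_fun_eq_card, Nat.card_eq_fintype_card]

/-- By the support condition, a column with label `≤ z` and `≠ z` vanishes in the rows with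
label `z`. -/
theorem map_labelProj_Cspace (P : Matrix (Fin m) (Fin n) K) (h : Fin m → ℤ × ℤ)
    (c : Fin n → ℤ × ℤ) (hsupp : ∀ i j, P i j ≠ 0 → h i ≤ c j) (z : ℤ × ℤ) :
    (Cspace P c z).map (labelProj K h z)
      = Submodule.span K (Set.range (Dsub P h c z).col) := by
  rw [Cspace, Submodule.map_span]
  apply le_antisymm
  · rw [Submodule.span_le]
    rintro _ ⟨_, ⟨j, hj, rfl⟩, rfl⟩
    by_cases hc : c j = z
    · exact Submodule.subset_span ⟨⟨j, hc⟩, rfl⟩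
    · have : labelProj K h z (fun i => P i j) = 0 := by
        ext i
        rw [labelProj_apply]
        by_contra hne
        have hle := hsupp i.1 j hne
        rw [i.2] at hle
        exact hc (le_antisymm hj hle)
      rw [this]
      exact Submodule.zero_mem _
  · refine Submodule.span_mono ?_
    rintro _ ⟨j, rfl⟩
    exact ⟨_, ⟨j.1, j.2.le, rfl⟩, rfl⟩

theorem finrank_sup_Cspace (P : Matrix (Fin m) (Fin n) K) (h : Fin m → ℤ × ℤ)
    (c : Fin n → ℤ × ℤ) (hsupp : ∀ i j, P i j ≠ 0 → h i ≤ c j) (z : ℤ × ℤ) :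
    (Dsub P h c z).rank
      + Module.finrank K ↥(Wspace K h (z.1 - 1, z.2) ⊔ Wspace K h (z.1, z.2 - 1))
      = Module.finrank K ↥((Wspace K h (z.1 - 1, z.2) ⊔ Wspace K h (z.1, z.2 - 1))
          ⊔ Cspace P c z) := by
  have hJ := Wspace_sup (K := K) h z
  set J := Wspace K h (z.1 - 1, z.2) ⊔ Wspace K h (z.1, z.2 - 1)
  have hmap : (J ⊔ Cspace P c z).map (labelProj K h z)
      = Submodule.span K (Set.range (Dsub P h c z).col) := by
    have h0 : J.map (labelProj K h z) = ⊥ := by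
      rw [← LinearMap.le_ker_iff_map, hJ]
      exact inf_le_right
    rw [Submodule.map_sup, h0, bot_sup_eq, map_labelProj_Cspace P h c hsupp z]
  have hker : (J ⊔ Cspace P c z) ⊓ LinearMap.ker (labelProj K h z) = J := by
    apply le_antisymm
    · conv_rhs => rw [hJ]
      refine inf_le_inf_right _ (sup_le ?_ (Cspace_le_Wspace P h c hsupp z))
      rw [hJ]
      exact inf_le_left
    · refine le_inf le_sup_left ?_
      rw [hJ]
      exact inf_le_right
  rw [← finrank_map_add_inf_ker (labelProj K h z) (J ⊔ Cspace P c z), hker, hmap,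
    Matrix.rank_eq_finrank_span_cols]

theorem finrank_Cspace (P : Matrix (Fin m) (Fin n) K) (c : Fin n → ℤ × ℤ)
    (hmin : ColumnMinimal P c) (z : ℤ × ℤ) :
    Nat.card {j : Fin n // c j = z}
      + Module.finrank K ↥(Cspace P c (z.1 - 1, z.2) ⊔ Cspace P c (z.1, z.2 - 1))
      = Module.finrank K (Cspace P c z) := by
  have hli := hmin z
  rw [Cspace_sup]
  set N := Submodule.span K
    {v : Fin m → K | ∃ j' : Fin n, c j' ≤ z ∧ c j' ≠ z ∧ v = fun i => P i j'}
  have hle : N ≤ Cspace P c z := by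
    refine Submodule.span_mono ?_
    rintro v ⟨j, hj, -, rfl⟩
    exact ⟨j, hj, rfl⟩
  have hmap : (Cspace P c z).map N.mkQ = Submodule.span K (Set.range
      (fun j : {j : Fin n // c j = z} =>
        Submodule.Quotient.mk (p := N) (fun i => P i j.1))) := by
    rw [Cspace, Submodule.map_span]
    apply le_antisymm
    · rw [Submodule.span_le]
      rintro _ ⟨_, ⟨j, hj, rfl⟩, rfl⟩
      by_cases hc : c j = z
      · exact Submodule.subset_span ⟨⟨j, hc⟩, rfl⟩
      · have : N.mkQ (fun i => P i j) = 0 := by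
          rw [Submodule.mkQ_apply, Submodule.Quotient.mk_eq_zero]
          exact Submodule.subset_span ⟨j, hj, hc, rfl⟩
        rw [this]
        exact Submodule.zero_mem _
    · refine Submodule.span_mono ?_
      rintro _ ⟨j, rfl⟩
      exact ⟨_, ⟨j.1, j.2.le, rfl⟩, rfl⟩
  rw [← finrank_map_add_inf_ker N.mkQ (Cspace P c z), Submodule.ker_mkQ, inf_eq_right.2 hle, hmap,
    finrank_span_eq_card hli, Nat.card_eq_fintype_card]

end Counts

/-! ### The Koszul maps at `z` -/

section Koszul

variable {K : Type*} [Field K] {m n : ℕ}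

theorem sub_fst_le (z : ℤ × ℤ) : ((z.1 - 1, z.2) : ℤ × ℤ) ≤ z := by simp [Prod.le_def]

theorem sub_snd_le (z : ℤ × ℤ) : ((z.1, z.2 - 1) : ℤ × ℤ) ≤ z := by simp [Prod.le_def]

theorem sub_both_le_fst (z : ℤ × ℤ) : ((z.1 - 1, z.2 - 1) : ℤ × ℤ) ≤ (z.1 - 1, z.2) := by
  simp [Prod.le_def]

theorem sub_both_le_snd (z : ℤ × ℤ) : ((z.1 - 1, z.2 - 1) : ℤ × ℤ) ≤ (z.1, z.2 - 1) := by
  simp [Prod.le_def]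

/-- The map `M_{z-e₁} × M_{z-e₂} → M_z`, `(x, y) ↦ x + y`. -/
noncomputable def koszulSum (P : Matrix (Fin m) (Fin n) K) (h : Fin m → ℤ × ℤ)
    (c : Fin n → ℤ × ℤ) (z : ℤ × ℤ) :
    (Mmod P h c (z.1 - 1, z.2) × Mmod P h c (z.1, z.2 - 1)) →ₗ[K] Mmod P h c z :=
  (structMap P h c (sub_fst_le z)).coprod (structMap P h c (sub_snd_le z))

/-- The map `M_{z-e₁-e₂} → M_{z-e₁} × M_{z-e₂}`, `x ↦ (x, x)`. The sign of the Koszul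
differential is omitted, as only the rank of this map is used. -/
noncomputable def koszulDiag (P : Matrix (Fin m) (Fin n) K) (h : Fin m → ℤ × ℤ)
    (c : Fin n → ℤ × ℤ) (z : ℤ × ℤ) :
    Mmod P h c (z.1 - 1, z.2 - 1) →ₗ[K]
      (Mmod P h c (z.1 - 1, z.2) × Mmod P h c (z.1, z.2 - 1)) :=
  (structMap P h c (sub_both_le_fst z)).prod (structMap P h c (sub_both_le_snd z))

theorem range_structMap (P : Matrix (Fin m) (Fin n) K) (h : Fin m → ℤ × ℤ)
    (c : Fin n → ℤ × ℤ) {z' z : ℤ × ℤ} (hz : z' ≤ z) :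
    (LinearMap.range (structMap P h c hz)).map (Mmod P h c z).subtype
      = (Wspace K h z').map (Cspace P c z).mkQ := by
  ext x
  constructor
  · rintro ⟨_, ⟨⟨_, w, hw, rfl⟩, rfl⟩, rfl⟩
    exact ⟨w, hw, rfl⟩
  · rintro ⟨w, hw, rfl⟩
    exact ⟨_, ⟨⟨_, w, hw, rfl⟩, rfl⟩, rfl⟩

theorem finrank_range_koszulSum (P : Matrix (Fin m) (Fin n) K) (h : Fin m → ℤ × ℤ)
    (c : Fin n → ℤ × ℤ) (z : ℤ × ℤ) :
    Module.finrank K (LinearMap.range (koszulSum P h c z)) + Module.finrank K (Cspace P c z)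
      = Module.finrank K ↥((Wspace K h (z.1 - 1, z.2) ⊔ Wspace K h (z.1, z.2 - 1))
          ⊔ Cspace P c z) := by
  rw [← finrank_map_add_inf_ker (Cspace P c z).mkQ (_ ⊔ Cspace P c z), Submodule.ker_mkQ,
    inf_eq_right.2 le_sup_right, ← Submodule.finrank_map_subtype_eq]
  have h0 : (Cspace P c z).map (Cspace P c z).mkQ = ⊥ := by
    rw [← LinearMap.le_ker_iff_map, Submodule.ker_mkQ]
  rw [koszulSum, LinearMap.range_coprod, Submodule.map_sup, Submodule.map_sup, Submodule.map_sup,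
    range_structMap, range_structMap, h0, sup_bot_eq]

theorem finrank_range_koszulDiag (P : Matrix (Fin m) (Fin n) K) (h : Fin m → ℤ × ℤ)
    (c : Fin n → ℤ × ℤ) (hsupp : ∀ i j, P i j ≠ 0 → h i ≤ c j) (z : ℤ × ℤ) :
    Module.finrank K (LinearMap.range (koszulDiag P h c z))
      + Module.finrank K ↥(Cspace P c (z.1 - 1, z.2) ⊓ Cspace P c (z.1, z.2 - 1))
      = Module.finrank K (Wspace K h (z.1 - 1, z.2 - 1)) := by
  set a : ℤ × ℤ := (z.1 - 1, z.2)
  set b : ℤ × ℤ := (z.1, z.2 - 1)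
  have hle : Cspace P c a ⊓ Cspace P c b ≤ Wspace K h (z.1 - 1, z.2 - 1) := by
    rw [← Wspace_inf]
    exact inf_le_inf (Cspace_le_Wspace P h c hsupp a) (Cspace_le_Wspace P h c hsupp b)
  rw [← finrank_map_add_inf_ker ((Cspace P c a).mkQ.prod (Cspace P c b).mkQ)
    (Wspace K h (z.1 - 1, z.2 - 1)), LinearMap.ker_prod, Submodule.ker_mkQ, Submodule.ker_mkQ,
    inf_eq_right.2 hle]
  congr 1
  have hinj : Function.Injective
      ((Mmod P h c a).subtype.prodMap (Mmod P h c b).subtype) := by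
    rw [LinearMap.coe_prodMap]
    exact (Submodule.subtype_injective _).prodMap (Submodule.subtype_injective _)
  have hrange : (LinearMap.range (koszulDiag P h c z)).map
      ((Mmod P h c a).subtype.prodMap (Mmod P h c b).subtype)
      = (Wspace K h (z.1 - 1, z.2 - 1)).map ((Cspace P c a).mkQ.prod (Cspace P c b).mkQ) := by
    ext x
    constructor
    · rintro ⟨_, ⟨⟨_, w, hw, rfl⟩, rfl⟩, rfl⟩
      exact ⟨w, hw, rfl⟩
    · rintro ⟨w, hw, rfl⟩
      exact ⟨_, ⟨⟨_, w, hw, rfl⟩, rfl⟩, rfl⟩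
  rw [← hrange]
  exact (Submodule.equivMapOfInjective _ hinj _).finrank_eq

/-- The numbers `m_z - rank D^z` and `n_z - rank D^z` in terms of the module `M` alone; the
equalities are rearranged so as to avoid subtraction in `ℕ`. -/
theorem betti_numerics (P : Matrix (Fin m) (Fin n) K) (h : Fin m → ℤ × ℤ)
    (c : Fin n → ℤ × ℤ) (hsupp : ∀ i j, P i j ≠ 0 → h i ≤ c j) (hmin : ColumnMinimal P c)
    (z : ℤ × ℤ) :
    Nat.card {i : Fin m // h i = z} + Module.finrank K (LinearMap.range (koszulSum P h c z))
        = Module.finrank K (Mmod P h c z) + (Dsub P h c z).rank ∧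
      Nat.card {j : Fin n // c j = z} + Module.finrank K (LinearMap.range (koszulSum P h c z))
          + Module.finrank K (LinearMap.range (koszulDiag P h c z))
        = Module.finrank K (Mmod P h c (z.1 - 1, z.2))
          + Module.finrank K (Mmod P h c (z.1, z.2 - 1)) + (Dsub P h c z).rank := by
  have hMz := finrank_Mmod P h c hsupp z
  have hMa := finrank_Mmod P h c hsupp (z.1 - 1, z.2)
  have hMb := finrank_Mmod P h c hsupp (z.1, z.2 - 1)
  have hW := finrank_Wspace (K := K) h z
  have hC := finrank_Cspace P c hmin z
  have hD := finrank_sup_Cspace P h c hsupp z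
  have hS := finrank_range_koszulSum P h c z
  have hT := finrank_range_koszulDiag P h c hsupp z
  have hWmod := Submodule.finrank_sup_add_finrank_inf_eq
    (Wspace K h (z.1 - 1, z.2)) (Wspace K h (z.1, z.2 - 1))
  have hCmod := Submodule.finrank_sup_add_finrank_inf_eq
    (Cspace P c (z.1 - 1, z.2)) (Cspace P c (z.1, z.2 - 1))
  rw [Wspace_inf] at hWmod
  constructor <;> omega

end Koszul

/-- Linear maps that correspond under isomorphisms of source and target have equal rank. -/
theorem finrank_range_eq_of_comm {K A B A' B' : Type*} [Field K]
    [AddCommGroup A] [Module K A] [AddCommGroup B] [Module K B]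
    [AddCommGroup A'] [Module K A'] [AddCommGroup B'] [Module K B']
    (f : A →ₗ[K] B) (g : A' →ₗ[K] B') (e : A ≃ₗ[K] A') (e' : B ≃ₗ[K] B')
    (hc : ∀ x, e' (f x) = g (e x)) :
    Module.finrank K (LinearMap.range f) = Module.finrank K (LinearMap.range g) := by
  have hr : LinearMap.range g = (LinearMap.range f).map (e' : B →ₗ[K] B') := by
    ext y
    constructor
    · rintro ⟨x, rfl⟩
      exact ⟨_, ⟨e.symm x, rfl⟩, by simp [hc]⟩
    · rintro ⟨_, ⟨x, rfl⟩, rfl⟩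
      exact ⟨e x, (hc x).symm⟩
  rw [hr]
  exact (LinearEquiv.finrank_map_eq e' _).symm

/-- The quantities `m_z − rank D^z` and `n_z − rank D^z` computed from any semi-minimal
(column-minimal) presentation are invariants of the presented module: if two semi-minimal
presentation data `(P, h, c)` and `(P', h', c')` present isomorphic modules (i.e. there
are isomorphisms `φ_z : M_z ≃ M'_z` commuting with the structure maps), then for every
`z`, `m_z − rank D^z = m'_z − rank D'^z` and `n_z − rank D^z = n'_z − rank D'^z`
(these are the bigraded Betti numbers `β₀(z)` and `β₁(z)`). -/
theorem betti_invariance_of_semiminimal_presentations {K : Type*} [Field K]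
    {m n m' n' : ℕ}
    (P : Matrix (Fin m) (Fin n) K) (h : Fin m → ℤ × ℤ) (c : Fin n → ℤ × ℤ)
    (P' : Matrix (Fin m') (Fin n') K) (h' : Fin m' → ℤ × ℤ) (c' : Fin n' → ℤ × ℤ)
    (hsupp : ∀ (i : Fin m) (j : Fin n), P i j ≠ 0 → h i ≤ c j)
    (hsupp' : ∀ (i : Fin m') (j : Fin n'), P' i j ≠ 0 → h' i ≤ c' j)
    (hmin : ColumnMinimal P c) (hmin' : ColumnMinimal P' c')
    (φ : ∀ z : ℤ × ℤ, ↥(Mmod P h c z) ≃ₗ[K] ↥(Mmod P' h' c' z))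
    (hφ : ∀ (z' z : ℤ × ℤ) (hz : z' ≤ z) (x : ↥(Mmod P h c z')),
      φ z (structMap P h c hz x) = structMap P' h' c' hz (φ z' x)) :
    ∀ z : ℤ × ℤ,
      Nat.card {i : Fin m // h i = z} - (Dsub P h c z).rank
          = Nat.card {i : Fin m' // h' i = z} - (Dsub P' h' c' z).rank ∧
      Nat.card {j : Fin n // c j = z} - (Dsub P h c z).rank
          = Nat.card {j : Fin n' // c' j = z} - (Dsub P' h' c' z).rank := by
  intro z
  obtain ⟨h0, h1⟩ := betti_numerics P h c hsupp hmin z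
  obtain ⟨h0', h1'⟩ := betti_numerics P' h' c' hsupp' hmin' z
  have hS := finrank_range_eq_of_comm (koszulSum P h c z) (koszulSum P' h' c' z)
    ((φ (z.1 - 1, z.2)).prodCongr (φ (z.1, z.2 - 1))) (φ z) (fun x => by
      simp [koszulSum, hφ])
  have hT := finrank_range_eq_of_comm (koszulDiag P h c z) (koszulDiag P' h' c' z)
    (φ (z.1 - 1, z.2 - 1)) ((φ (z.1 - 1, z.2)).prodCongr (φ (z.1, z.2 - 1))) (fun x => by
      simp [koszulDiag, hφ])
  have hz := (φ z).finrank_eq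
  have ha := (φ (z.1 - 1, z.2)).finrank_eq
  have hb := (φ (z.1, z.2 - 1)).finrank_eq
  constructor <;> omega
end

section
/- Let K be a field, D an m×n matrix over K with integer column labels g_1 ≤ g_2 ≤ … ≤ g_n in ℤ (nondecreasing), and U an n×n unipotent upper triangular matrix over K such that R := D·U is reduced. Then for every z ∈ ℤ: the rank of the submatrix of D consisting of the columns j with g_j ≤ z equals the number of indices j with g_j ≤ z and R(*,j) ≠ 0; and dim( ker D ∩ span{e_j : g_j ≤ z} ) equals the number of indices j with g_j ≤ z and R(*,j) = 0. (The pointwise rank and pointwise nullity of a morphism of free 1-parameter persistence modules can be read off from the reduced matrix produced by the graded reduction.) -/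
/-- In a vanishing combination, the vector of largest pivot among those with nonzero coefficient
is the only one contributing to the coordinate at that pivot. -/
theorem linearIndependent_of_isPivot {K ι : Type*} [Field K] [Fintype ι] {m : ℕ}
    (v : ι → Fin m → K) (p : ι → Fin m) (hp : Function.Injective p)
    (hv : ∀ i, IsPivot (v i) (p i)) : LinearIndependent K v := by
  classical
  rw [Fintype.linearIndependent_iff]
  intro c hc
  by_contra! hne
  obtain ⟨i, hi⟩ := hne
  obtain ⟨k, hk, hmax⟩ := (Finset.univ.filter fun k => c k ≠ 0).exists_max_image p
    ⟨i, by simpa using hi⟩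
  have hk' : c k ≠ 0 := by simpa using hk
  have h := congrFun hc (p k)
  rw [Finset.sum_apply, Finset.sum_eq_single k] at h
  · exact mul_ne_zero hk' (hv k).1 (by simpa using h)
  · intro l _ hlk
    by_cases hl : c l = 0
    · simp [hl]
    · have h1 : p l ≤ p k := hmax l (by simpa using hl)
      have h2 : v l (p k) = 0 := by
        by_contra h3
        exact hlk (hp (le_antisymm h1 ((hv l).2 _ h3)))
      simp [h2]
  · simp

/-- The rank of the columns selected by `P` of a reduced matrix is the number of nonzero columns
among them. -/
theorem rank_of_reduced {K : Type*} [Field K] {m n : ℕ} {R : Matrix (Fin m) (Fin n) K}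
    (hR : Reduced R) (P : Fin n → Prop) [DecidablePred P] :
    (R.submatrix id (fun j : {j : Fin n // P j} => j.1)).rank
      = Nat.card {j : Fin n // P j ∧ (fun i => R i j) ≠ 0} := by
  classical
  let w : {j : Fin n // P j ∧ (fun i => R i j) ≠ 0} → Fin m → K := fun j i => R i j.1
  choose p hp using fun j : {j : Fin n // P j ∧ (fun i => R i j) ≠ 0} => exists_isPivot j.2.2
  have hinj : Function.Injective p := by
    intro j k hjk
    by_contra hne
    exact hR j.1 k.1 (p j) (fun h => hne (Subtype.ext h)) (hp j) (hjk ▸ hp k)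
  have hli : LinearIndependent K w := linearIndependent_of_isPivot w p hinj hp
  rw [Matrix.rank_eq_finrank_span_cols, Nat.card_eq_fintype_card, ← finrank_span_eq_card hli]
  suffices h : Submodule.span K
      (Set.range (R.submatrix id (fun j : {j : Fin n // P j} => j.1)).col) =
      Submodule.span K (Set.range w) by rw [h]
  apply le_antisymm
  · rw [Submodule.span_le]
    rintro _ ⟨j, rfl⟩
    by_cases h0 : (fun i => R i j.1) = 0
    · have : (R.submatrix id (fun j : {j : Fin n // P j} => j.1)).col j = 0 := h0
      rw [this]
      exact Submodule.zero_mem _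
    · exact Submodule.subset_span ⟨⟨j.1, j.2, h0⟩, rfl⟩
  · rw [Submodule.span_le]
    rintro _ ⟨j, rfl⟩
    exact Submodule.subset_span ⟨⟨j.1, j.2.1⟩, rfl⟩

/-- Left-to-right column additions do not change the rank of an initial segment of columns. -/
theorem rank_submatrix_eq {K : Type*} [Field K] {m n : ℕ} (D : Matrix (Fin m) (Fin n) K)
    {U : Matrix (Fin n) (Fin n) K} (hU : UnipotentUpper U) (P : Fin n → Prop) [DecidablePred P]
    (hP : ∀ i j, i ≤ j → P j → P i) :
    (D.submatrix id (fun j : {j : Fin n // P j} => j.1)).rank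
      = ((D * U).submatrix id (fun j : {j : Fin n // P j} => j.1)).rank := by
  classical
  let f : {j : Fin n // P j} → Fin n := fun j => j.1
  have hdet : (U.submatrix f f).det = 1 := by
    rw [Matrix.det_of_isUpperTriangular]
    · exact Finset.prod_eq_one fun i _ => hU.2 i.1
    · intro i j hij
      exact hU.1 i.1 j.1 hij
  have hmul : (D * U).submatrix id f = D.submatrix id f * U.submatrix f f := by
    ext i j
    simp only [Matrix.submatrix_apply, Matrix.mul_apply, id]
    rw [← Fintype.sum_subtype_add_sum_subtype P, add_eq_left]
    refine Finset.sum_eq_zero fun k _ => ?_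
    -- a row outside the initial segment lies strictly below every diagonal entry inside it
    rw [hU.1 k.1 j.1 (lt_of_not_ge fun h => k.2 (hP _ _ h j.2)), mul_zero]
  change (D.submatrix id f).rank = ((D * U).submatrix id f).rank
  rw [hmul, Matrix.rank_mul_eq_left_of_isUnit_det]
  simp [hdet]

/-- Rank-nullity for `D` restricted to the coordinate subspace selected by `P`. -/
theorem finrank_ker_inf_add_rank {K : Type*} [Field K] {m n : ℕ} (D : Matrix (Fin m) (Fin n) K)
    (P : Fin n → Prop) [DecidablePred P] :
    (D.submatrix id (fun j : {j : Fin n // P j} => j.1)).rank +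
      Module.finrank K
        ↥(LinearMap.ker D.mulVecLin ⊓
            Submodule.span K {w : Fin n → K | ∃ j : Fin n, P j ∧ w = Pi.single j 1})
      = Nat.card {j : Fin n // P j} := by
  classical
  let e : {j : Fin n // P j} → Fin n → K := fun j => Pi.single j.1 1
  have hset : {w : Fin n → K | ∃ j : Fin n, P j ∧ w = Pi.single j 1} = Set.range e := by
    ext w
    constructor
    · rintro ⟨j, hj, rfl⟩
      exact ⟨⟨j, hj⟩, rfl⟩
    · rintro ⟨j, rfl⟩
      exact ⟨j.1, j.2, rfl⟩
  rw [hset]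
  have hli : LinearIndependent K e :=
    (Pi.linearIndependent_single_one (Fin n) K).comp _ Subtype.val_injective
  have hrn := LinearMap.finrank_range_add_finrank_ker
    (D.mulVecLin.domRestrict (Submodule.span K (Set.range e)))
  rw [finrank_span_eq_card hli] at hrn
  rw [Nat.card_eq_fintype_card, ← hrn]
  congr 1
  · have hcol : (D.submatrix id (fun j : {j : Fin n // P j} => j.1)).col = D.mulVecLin ∘ e := by
      funext j
      ext i
      simp [e, Matrix.col]
    rw [Matrix.rank_eq_finrank_span_cols, LinearMap.range_domRestrict, Submodule.map_span,
      ← Set.range_comp, hcol]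
  · rw [LinearMap.ker_domRestrict, inf_comm, ← Submodule.map_comap_subtype]
    exact Submodule.finrank_map_subtype_eq _ _

/-- The pointwise ranks and nullities of a morphism of free 1-parameter persistence
modules, represented by a matrix `D` with nondecreasing integer column labels `g`, can be
read off from a reduced matrix `R = D·U` obtained from `D` by left-to-right column
additions: for every `z ∈ ℤ`, the rank of the submatrix of `D` on the columns with label
`≤ z` is the number of nonzero columns of `R` with label `≤ z`, and the dimension of
`ker D ∩ span{e_j : g_j ≤ z}` is the number of zero columns of `R` with label `≤ z`. -/
theorem pointwise_rank_nullity_from_graded_reduction {K : Type*} [Field K] {m n : ℕ}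
    (D : Matrix (Fin m) (Fin n) K) (g : Fin n → ℤ) (hg : Monotone g)
    (U : Matrix (Fin n) (Fin n) K) (hU : UnipotentUpper U)
    (hR : Reduced (D * U)) :
    ∀ z : ℤ,
      (D.submatrix id (fun j : {j : Fin n // g j ≤ z} => j.1)).rank
          = Nat.card {j : Fin n // g j ≤ z ∧ (fun i => (D * U) i j) ≠ 0} ∧
      Module.finrank K
          ↥(LinearMap.ker D.mulVecLin ⊓
              Submodule.span K {w : Fin n → K | ∃ j : Fin n, g j ≤ z ∧ w = Pi.single j 1})
        = Nat.card {j : Fin n // g j ≤ z ∧ (fun i => (D * U) i j) = 0} := by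
  intro z
  have hrank := (rank_submatrix_eq D hU (fun j => g j ≤ z)
    (fun i j hij hj => (hg hij).trans hj)).trans (rank_of_reduced hR fun j => g j ≤ z)
  refine ⟨hrank, ?_⟩
  have hrn := finrank_ker_inf_add_rank D (fun j => g j ≤ z)
  -- the columns in the initial segment are split into zero and nonzero columns of `D * U`
  have hcount : Nat.card {j : Fin n // g j ≤ z ∧ (fun i => (D * U) i j) ≠ 0} +
      Nat.card {j : Fin n // g j ≤ z ∧ (fun i => (D * U) i j) = 0} =
      Nat.card {j : Fin n // g j ≤ z} := by
    classical
    simp only [Nat.card_eq_fintype_card, Fintype.card_subtype]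
    rw [← Finset.card_filter_add_card_filter_not (s := Finset.univ.filter fun j => g j ≤ z)
      (fun j => (fun i => (D * U) i j) = 0), Finset.filter_filter, Finset.filter_filter, add_comm]
  omega
end
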